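/- Let p be an odd prime, s a positive integer, and let m = (p^s - 1)/2 or m = p^s - 1. Then, modulo p^{s+4}, the sum S = sum_{k=0}^{m} (-1)^k (4k+1) (1/2)_k^5 / (k!)^5 satisfies: if p^s ≡ 1 (mod 4), S ≡ ((1/2)_{(p^s-1)/4}^2 / (1)_{(p^s-1)/4}^2) * ( p^s + (p^{3s}/4) H_{(p^s-1)/2}^{(2)} - (p^{3s}/8) H_{(p^s-1)/4}^{(2)} ); and if p^s ≡ 3 (mod 4), S ≡ p^{2s} (3/4)_{(p^s-1)/2} / (5/4)_{(p^s-1)/2}. -/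

import Mathlib

open Finset

/-- Rising factorial `(x)_k = x(x+1)⋯(x+k-1)`. -/
def poch (x : ℚ) (k : ℕ) : ℚ := ∏ i ∈ Finset.range k, (x + i)

/-- `a ≡ b (mod p^m)`: the `p`-adic valuation of `a - b` is at least `m`. -/
def pcong (p : ℕ) (m : ℕ) (a b : ℚ) : Prop :=
  a = b ∨ (m : ℤ) ≤ padicValRat p (a - b)

/-- Generalized harmonic number `H_m^{(ℓ)} = ∑_{k=1}^m 1/k^ℓ`. -/
def harm (m ℓ : ℕ) : ℚ := ∑ k ∈ Finset.Icc 1 m, 1 / (k : ℚ) ^ ℓ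

/-- Well-poised quotient. -/
def UU (u : ℚ) (k : ℕ) : ℚ := ∏ i ∈ range k, (((i:ℚ) + 1/2)^2 - u) / (((i:ℚ) + 1)^2 - u)
/-- expansion coefficients -/
def al (u : ℚ) (j : ℕ) : ℚ := ∏ i ∈ range j, (-((1/2 + (i:ℚ)) * (i + 1)) / (((i:ℚ) + 1)^2 - u))
/-- basis -/
def et (k j : ℕ) : ℚ := (k.choose j : ℚ) * poch (1/2 + k) j / (j.factorial : ℚ)
/-- weights -/
def cc (k : ℕ) : ℚ := (-1)^k * (4 * k + 1) * poch (1/2) k / (k.factorial : ℚ)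

lemma poch_zero (x : ℚ) : poch x 0 = 1 := by simp [poch]
lemma poch_succ (x : ℚ) (k : ℕ) : poch x (k+1) = poch x k * (x + k) := by
  simp [poch, prod_range_succ]
lemma poch_succ' (x : ℚ) (k : ℕ) : poch x (k+1) = x * poch (x+1) k := by
  simp only [poch, prod_range_succ']
  rw [mul_comm]; congr 1
  · simp
  · apply prod_congr rfl; intro i _; push_cast; ring
lemma poch_shift (x : ℚ) (k : ℕ) : x * poch (x+1) k = poch x k * (x + k) := by
  rw [← poch_succ', poch_succ]
lemma UU_succ (u : ℚ) (k : ℕ) : UU u (k+1) = UU u k * ((((k:ℚ) + 1/2)^2 - u) / (((k:ℚ) + 1)^2 - u)) := by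
  simp only [UU, prod_range_succ]
lemma al_succ (u : ℚ) (k : ℕ) : al u (k+1) = al u k * (-((1/2 + (k:ℚ)) * (k + 1)) / (((k:ℚ) + 1)^2 - u)) := by
  simp only [al, prod_range_succ]

lemma ch1 (k j : ℕ) : ((k+1).choose j : ℚ) * ((k:ℚ) + 1 - j) = (k+1) * (k.choose j : ℚ) := by
  rcases Nat.lt_or_ge (k+1) j with h | h
  · rw [Nat.choose_eq_zero_of_lt h, Nat.choose_eq_zero_of_lt (by omega)]; simp
  · have := Nat.choose_mul_succ_eq k j
    have h2 : (((k+1 - j : ℕ)):ℚ) = (k:ℚ) + 1 - j := by rw [Nat.cast_sub h]; push_cast; ring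
    rw [← h2, mul_comm ((k:ℚ)+1)]; exact_mod_cast this.symm
lemma ch2 (k j : ℕ) : ((k+1).choose (j+1) : ℚ) * ((j:ℚ) + 1) = (k+1) * (k.choose j : ℚ) := by
  exact_mod_cast (Nat.add_one_mul_choose_eq k j).symm
lemma ch3 (k j : ℕ) : (k.choose (j+1) : ℚ) * ((j:ℚ) + 1) = (k.choose j : ℚ) * (k - j) := by
  rcases Nat.lt_or_ge k j with h | h
  · rw [Nat.choose_eq_zero_of_lt h, Nat.choose_eq_zero_of_lt (by omega)]; simp
  · have := Nat.choose_succ_right_eq k j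
    rw [← Nat.cast_sub h]; exact_mod_cast this

lemma et_zero (k : ℕ) : et k 0 = 1 := by simp [et, poch_zero]

lemma fac_ne (k : ℕ) : (k.factorial : ℚ) ≠ 0 := by exact_mod_cast k.factorial_ne_zero
lemma fac_succ (k : ℕ) : ((k+1).factorial : ℚ) = (k+1) * k.factorial := by
  push_cast [Nat.factorial_succ]; ring

lemma et_succ_right (k j : ℕ) : ((j:ℚ)+1)^2 * et k (j+1) = ((k:ℚ) - j) * (k + j + 1/2) * et k j := by
  unfold et
  rw [poch_succ, fac_succ]
  have h := ch3 k j
  have := fac_ne j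
  have h2 : (j:ℚ)+1 ≠ 0 := by positivity
  generalize poch (1/2+k) j = P
  field_simp
  linear_combination P * (1 + 2*k+2*j) * h

/-- (k+1-j) et(k+1,j) relation -/
lemma et_succ_left (k j : ℕ) : ((k:ℚ)+1-j) * ((k:ℚ)+1/2) * et (k+1) j = ((k:ℚ)+1) * (k + 1/2 + j) * et k j := by
  unfold et
  have h := ch1 k j
  have h2 := poch_shift (1/2 + k) j
  have := fac_ne j
  rw [show (1/2 + ((k+1:ℕ):ℚ)) = 1/2 + k + 1 by push_cast; ring]
  generalize poch (1/2+k) j = P at *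
  generalize poch (1/2+k+1) j = Q at *
  field_simp
  linear_combination 2 * (1/2+(k:ℚ)) * Q * h + 2 * ((k:ℚ)+1) * k.choose j * h2

lemma L1_part (u : ℚ) (hu : ∀ j : ℕ, ((j:ℚ)+1)^2 - u ≠ 0) (k J : ℕ) :
    ∑ j ∈ range J, al u j * ((((k:ℚ)+1)^2 - u) * et (k+1) j - (((k:ℚ)+1/2)^2 - u) * et k j)
     = - (2 * k + 3/2) * J * (J^2 - u) * al u J *
        (((k+1).choose J : ℚ) * poch (1/2 + k) J / (J.factorial : ℚ)) / ((k+1) * (k+1/2)) := by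
  have hk1 : (k:ℚ) + 1 ≠ 0 := by positivity
  have hk2 : (k:ℚ) + 1/2 ≠ 0 := by positivity
  have hk3 : 2 * (k:ℚ) + 1 ≠ 0 := by positivity
  induction J with
  | zero => simp
  | succ J ih =>
    rw [sum_range_succ, ih]
    have hJ1 : (J:ℚ) + 1 ≠ 0 := by positivity
    have e1 : et k J = ((k+1).choose J : ℚ) * ((k:ℚ) + 1 - J) / (k+1) * poch (1/2 + k) J / (J.factorial : ℚ) := by
      rw [ch1]; unfold et; field_simp
    have e2 : et (k+1) J = ((k+1).choose J : ℚ) * (poch (1/2 + k) J * (1/2 + k + J) / (1/2+k)) / (J.factorial : ℚ) := by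
      rw [← poch_shift]; unfold et; push_cast
      rw [show (1/2 + ((k:ℚ)+1)) = 1/2 + k + 1 by ring]
      field_simp
    have e3 : ((k+1).choose (J+1) : ℚ) = ((k+1).choose J : ℚ) * (k + 1 - J) / (J+1) := by
      rw [eq_div_iff hJ1, ch3]; push_cast; ring
    rw [e1, e2, e3, al_succ, poch_succ, fac_succ]
    have := fac_ne J
    have := hu J
    generalize poch (1/2 + k) J = P
    generalize al u J = A
    generalize ((k+1).choose J : ℚ) = C
    generalize (J.factorial : ℚ) = f at *
    push_cast
    field_simp
    ring

lemma et_zero_of_lt {k j : ℕ} (h : k < j) : et k j = 0 := by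
  simp [et, Nat.choose_eq_zero_of_lt h]

lemma L1 (u : ℚ) (hu : ∀ j : ℕ, ((j:ℚ)+1)^2 - u ≠ 0) (k J : ℕ) (hJ : k < J) :
    UU u k = ∑ j ∈ range J, al u j * et k j := by
  induction k with
  | zero =>
    obtain ⟨J, rfl⟩ : ∃ i, J = i + 1 := ⟨J - 1, by omega⟩
    rw [sum_range_succ']
    rw [sum_eq_zero]
    · simp [UU, al, et_zero]
    · intro i _; rw [et_zero_of_lt (by omega)]; simp
  | succ k ih =>
    have h := L1_part u hu k (J)
    rcases Nat.lt_or_ge (k+1) J with h' | h'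
    swap
    · omega
    rw [Nat.choose_eq_zero_of_lt h'] at h
    rw [UU_succ, ih (by omega)]
    have h0 := hu k
    simp only [mul_sub, sum_sub_distrib] at h
    rw [mul_div_assoc', div_eq_iff h0]
    rw [sum_mul, sum_mul]
    have e1 : ∀ x, al u x * ((((k:ℚ)+1)^2 - u) * et (k+1) x) = al u x * et (k+1) x * (((k:ℚ)+1)^2 - u) := fun x => by ring
    have e2 : ∀ x, al u x * ((((k:ℚ)+1/2)^2 - u) * et k x) = al u x * et k x * (((k:ℚ)+1/2)^2 - u) := fun x => by ring
    simp only [e1, e2] at h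
    simp at h
    simp
    linarith

lemma L3 (m j : ℕ) : ∑ k ∈ range (m+1), cc k * et k j =
    (-1)^m * (2 * poch (1/2) (m+1) / (m.factorial:ℚ)) * ((m.choose j : ℚ) * (poch (3/2 + m) j / (j.factorial : ℚ))) := by
  induction m with
  | zero =>
    rcases j with _ | j
    · simp [cc, et, poch_zero, poch]
    · simp [et_zero_of_lt]
  | succ m ih =>
    rw [sum_range_succ, ih]
    unfold cc et
    have h1 := ch1 m j
    have h2 := poch_shift (3/2 + m) j
    have hm : (m:ℚ) + 1 ≠ 0 := by positivity
    have hm2 : (m:ℚ) + 3/2 ≠ 0 := by positivity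
    have hm3 : 2 * (m:ℚ) + 3 ≠ 0 := by positivity
    rw [show (1/2 + ((m+1:ℕ):ℚ)) = 3/2 + m by push_cast; ring, poch_succ (1/2) (m+1), fac_succ]
    have e1 : (m.choose j : ℚ) = ((m+1).choose j : ℚ) * ((m:ℚ) + 1 - j) / (m+1) := by
      rw [h1]; field_simp
    have e2 : poch (3/2 + ((m+1:ℕ):ℚ)) j = poch (3/2+m) j * (3/2+m+j) / (3/2+m) := by
      rw [← h2]; push_cast
      rw [show (3/2 + ((m:ℚ)+1)) = 3/2 + m + 1 by ring]
      field_simp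
    rw [e1, e2]
    have := fac_ne m
    have := fac_ne j
    push_cast
    rw [pow_succ]
    field_simp
    ring

lemma et_pair (k l j : ℕ) : ((k:ℚ) - j) * (k + j + 1/2) * et k l =
    ((l:ℚ)+1)^2 * et k (l+1) + ((l:ℚ) - j) * (l + j + 1/2) * et k l := by
  rw [et_succ_right]; ring

/-- linearization coefficient -/
def lc (i j r : ℕ) : ℚ := ((i+r).choose i : ℚ) * ((i+r).choose j : ℚ) *
   (poch (1/2 + ((i+r : ℕ):ℚ)) (j-r) / ((j-r).factorial : ℚ))

lemma lc_last (i j : ℕ) : ((j:ℚ)+1)^2 * lc i (j+1) (j+1) = (((i+j:ℕ):ℚ)+1)^2 * lc i j j := by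
  unfold lc
  simp only [Nat.sub_self, poch_zero, Nat.factorial_zero]
  have h1 := ch2 (i+j) j
  have h2 := ch1 (i+j) i
  rw [show i + (j+1) = i+j+1 by ring]
  push_cast at *
  have h2' : ((i + j + 1).choose i : ℚ) * (j+1) = (i+j+1) * ((i+j).choose i : ℚ) := by
    rw [← h2]; ring
  linear_combination ((i + j + 1).choose i : ℚ) * (j+1) * h1 + (i+j+1) * ((i+j).choose j : ℚ) * h2'

lemma lc_zero (i j : ℕ) : ((j:ℚ)+1)^2 * lc i (j+1) 0 = ((i:ℚ) - j) * (i + j + 1/2) * lc i j 0 := by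
  unfold lc
  simp only [Nat.sub_zero, Nat.add_zero, poch_succ, fac_succ]
  have h1 := ch3 i j
  have := fac_ne j
  have h2 : (j:ℚ)+1 ≠ 0 := by positivity
  generalize poch (1/2+i) j = P
  field_simp
  linear_combination (P) * (1 + 2*i+2*j) * h1

lemma lc_mid (i r e : ℕ) : (((r+1+e:ℕ):ℚ)+1)^2 * lc i (r+1+e+1) (r+1) =
    (((i+r:ℕ):ℚ)+1)^2 * lc i (r+1+e) r +
    (((i+(r+1):ℕ):ℚ) - (r+1+e:ℕ)) * ((i+(r+1):ℕ) + (r+1+e:ℕ) + 1/2) * lc i (r+1+e) (r+1) := by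
  unfold lc
  rw [show r+1+e+1-(r+1) = e+1 by omega, show r+1+e-r = e+1 by omega, show r+1+e-(r+1) = e by omega]
  rw [show i + (r+1) = i+r+1 by ring]
  have h1 := ch2 (i+r) (r+1+e)
  have h2 := ch1 (i+r) i
  have h3 := ch1 (i+r) (r+1+e)
  have h4 : ((i+r+1).choose i : ℚ) * (r+1) = ((i+r:ℕ)+1) * ((i+r).choose i : ℚ) := by
    rw [← h2]; push_cast; ring
  rw [poch_succ' (1/2 + ((i+r:ℕ):ℚ)), poch_succ, fac_succ]
  rw [show (1/2 + ((i+r+1:ℕ):ℚ)) = 1/2 + ((i+r:ℕ):ℚ) + 1 by push_cast; ring]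
  have := fac_ne e
  have he : (e:ℚ)+1 ≠ 0 := by positivity
  generalize poch (1/2 + ((i+r:ℕ):ℚ) + 1) e = P at *
  generalize ((i+r+1).choose (r+1+e+1) : ℚ) = C1 at *
  generalize ((i+r+1).choose i : ℚ) = C2 at *
  generalize ((i+r).choose i : ℚ) = C3 at *
  generalize ((i+r+1).choose (r+1+e) : ℚ) = C4 at *
  generalize ((i+r).choose (r+1+e) : ℚ) = C5 at *
  generalize (e.factorial:ℚ) = f at *
  push_cast at *
  have k1 : C1 = ((i:ℚ)+r+1) * C5 / (r+1+e+1) := by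
    rw [eq_div_iff (by positivity)]; exact h1
  have k3 : C3 = C2 * (r+1) / ((i:ℚ)+r+1) := by
    rw [eq_div_iff (by positivity), h4]; ring
  have k5 : C5 = C4 * ((i:ℚ)+r+1-(r+1+e)) / ((i:ℚ)+r+1) := by
    rw [eq_div_iff (by positivity), h3]; ring
  have : (i:ℚ)+r+1 ≠ 0 := by positivity
  have : (r:ℚ)+1+e+1 ≠ 0 := by positivity
  rw [k1, k5, k3]
  field_simp
  ring

lemma L2 (k i j : ℕ) : et k i * et k j = ∑ r ∈ range (j+1), lc i j r * et k (i+r) := by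
  induction j with
  | zero => simp [lc, et_zero, poch_zero]
  | succ j ih =>
    have hj : ((j:ℚ)+1)^2 ≠ 0 := by positivity
    apply mul_left_cancel₀ hj
    have e1 : ((j:ℚ)+1)^2 * (et k i * et k (j+1)) = ((k:ℚ) - j) * (k + j + 1/2) * (et k i * et k j) := by
      linear_combination et k i * et_succ_right k j
    rw [e1, ih, mul_sum, mul_sum]
    have e2 : ∀ r ∈ range (j+1), ((k:ℚ) - j) * (k + j + 1/2) * (lc i j r * et k (i+r)) =
       (((i+r:ℕ):ℚ)+1)^2 * lc i j r * et k (i+(r+1)) + 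
        (((i+r:ℕ):ℚ) - j) * ((i+r:ℕ) + j + 1/2) * lc i j r * et k (i+r) := by
      intro r _
      linear_combination lc i j r * et_pair k (i+r) j
    rw [sum_congr rfl e2, sum_add_distrib, sum_range_succ, sum_range_succ' (n := j),
      sum_range_succ (n := j+1), sum_range_succ' (n := j)]
    have e3 : ∀ r ∈ range j, ((j:ℚ)+1)^2 * (lc i (j+1) (r+1) * et k (i+(r+1))) = 
       (((i+r:ℕ):ℚ)+1)^2 * lc i j r * et k (i+(r+1)) + 
        (((i+(r+1):ℕ):ℚ) - j) * ((i+(r+1):ℕ) + j + 1/2) * lc i j (r+1) * et k (i+(r+1)) := by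
      intro r hr
      obtain ⟨e, rfl⟩ : ∃ e, j = r+1+e := ⟨j - (r+1), by simp at hr; omega⟩
      linear_combination et k (i+(r+1)) * lc_mid i r e
    rw [sum_congr rfl e3, sum_add_distrib]
    have h0 := lc_zero i j
    have h1 := lc_last i j
    simp only [Nat.add_zero] at *
    linear_combination (- et k (i+(j+1))) * h1 - et k i * h0

/-- The special point. -/
def NN (M : ℕ) : ℚ := ((M:ℚ) + 1/2)^2

lemma hNN (M : ℕ) : ∀ j : ℕ, ((j:ℚ)+1)^2 - NN M ≠ 0 := by
  intro j h
  have : (((j:ℚ)+1) - (M + 1/2)) * ((j+1) + (M+1/2)) = 0 := by rw [← h, NN]; ring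
  rcases mul_eq_zero.1 this with h | h
  · have h2 : (2 * j + 2 : ℚ) = 2 * M + 1 := by linarith
    have h3 : 2 * j + 2 = 2 * M + 1 := by exact_mod_cast h2
    omega
  · have : (0:ℚ) < (j+1) + (M+1/2) := by positivity
    linarith

/-- Values of inner sums. -/
def vv (M j : ℕ) : ℚ := (M.choose j : ℚ) * poch (M+1) j / (j.factorial : ℚ)

lemma vv_succ (k j : ℕ) : ((j:ℚ)+1)^2 * vv k (j+1) = ((k:ℚ) - j) * (k + 1 + j) * vv k j := by
  unfold vv
  rw [poch_succ, fac_succ]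
  have h := ch3 k j
  have := fac_ne j
  have h2 : (j:ℚ)+1 ≠ 0 := by positivity
  generalize poch (k+1) j = P
  field_simp
  linear_combination P * h

lemma L4_part (M j K : ℕ) :
    ∑ k ∈ range K, cc k * UU (NN M) k * et k j * ((k:ℚ)^2 + k/2 + j/2 - M*(M+1)) =
     -2 * ((-1)^K * poch (1/2) K / (K.factorial : ℚ)) * UU (NN M) K * ((K:ℚ)^2 - NN M) * (((K:ℚ) - j) * et K j) := by
  induction K with
  | zero =>
    rcases j with _ | j
    · simp
    · simp [et_zero_of_lt]
  | succ K ih =>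
    rw [sum_range_succ, ih]
    have h1 := et_succ_left K j
    have hK : (K:ℚ) + 1/2 ≠ 0 := by positivity
    have hK2 : 2*(K:ℚ) + 1 ≠ 0 := by positivity
    have hK1 : (K:ℚ) + 1 ≠ 0 := by positivity
    have e1 : ((K+1:ℕ) - (j:ℚ)) * et (K+1) j = ((K:ℚ)+1) * (K + 1/2 + j) * et K j / (K + 1/2) := by
      rw [eq_div_iff hK, ← h1]; push_cast; ring
    rw [e1, UU_succ, poch_succ, fac_succ]
    unfold cc
    have := hNN M K
    have hf := fac_ne K
    have h7 : (1/2 + (K:ℚ)) = K + 1/2 := by ring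
    rw [h7]
    generalize et K j = E
    generalize poch (1/2) K = P
    generalize UU (NN M) K = V
    generalize (K.factorial : ℚ) = f at *
    rw [show (M:ℚ)*(M+1) = NN M - 1/4 by unfold NN; ring]
    generalize NN M = n at *
    push_cast
    rw [pow_succ]
    field_simp
    ring

lemma UU_zero_of_lt {M k : ℕ} (h : M < k) : UU (NN M) k = 0 := by
  unfold UU
  apply prod_eq_zero (mem_range.2 h)
  simp [NN]

lemma L4_rec (M j : ℕ) : ((j:ℚ)+1)^2 * ∑ k ∈ range (M+1), cc k * UU (NN M) k * et k (j+1) =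
    ((M:ℚ) - j) * (M + 1 + j) * ∑ k ∈ range (M+1), cc k * UU (NN M) k * et k j := by
  have h := L4_part M j (M+1)
  rw [UU_zero_of_lt (Nat.lt_succ_self M)] at h
  rw [mul_sum, mul_sum, ← sub_eq_zero, ← sum_sub_distrib]
  rw [show (-2 * ((-1)^(M+1) * poch (1/2) (M+1) / ((M+1).factorial : ℚ)) * 0 * (((M+1:ℕ):ℚ)^2 - NN M) * ((((M+1:ℕ):ℚ) - j) * et (M+1) j)) = 0 by ring] at h
  rw [← h]
  apply sum_congr rfl
  intro k _
  linear_combination cc k * UU (NN M) k * et_succ_right k j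

lemma UU_top (M : ℕ) : UU (NN M) M * (poch (1/2) M * poch (M+3/2) M) = (M.factorial : ℚ) * poch (M+1) M := by
  have h1 : (M.factorial : ℚ) = ∏ i ∈ range M, ((M:ℚ) - i) := by
    rw [← prod_range_add_one_eq_factorial, ← prod_range_reflect]
    push_cast
    apply prod_congr rfl
    intro i hi
    simp at hi
    rw [show M - 1 - i = M - (1+i) by omega, Nat.cast_sub (by omega)]
    push_cast; ring
  have h2 : poch (1/2) M = ∏ i ∈ range M, ((M:ℚ) - i - 1/2) := by
    unfold poch
    rw [← prod_range_reflect]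
    apply prod_congr rfl
    intro i hi
    simp at hi
    rw [show M - 1 - i = M - (1+i) by omega, Nat.cast_sub (by omega)]
    push_cast; ring
  rw [h1, h2]
  unfold poch UU
  rw [← prod_mul_distrib, ← prod_mul_distrib, ← prod_mul_distrib]
  apply prod_congr rfl
  intro i _
  have := hNN M i
  rw [div_mul_eq_mul_div, div_eq_iff this]
  unfold NN
  ring

lemma poch_pos {x : ℚ} (hx : 0 < x) (k : ℕ) : 0 < poch x k := by
  unfold poch; apply prod_pos; intro i _; positivity

lemma L4_top (M : ℕ) : cc M * UU (NN M) M * et M M = (-1)^M * (2*M+1) * vv M M := by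
  have h := UU_top M
  have p1 := (poch_pos (x := 1/2) (by norm_num) M).ne'
  have p2 := (poch_pos (x := M+3/2) (by positivity) M).ne'
  have h1 : UU (NN M) M = (M.factorial : ℚ) * poch (M+1) M / (poch (1/2) M * poch (M+3/2) M) := by
    rw [eq_div_iff (by positivity), h]
  have h2 := poch_shift (1/2 + M) M
  rw [show (1/2 + (M:ℚ) + 1) = M + 3/2 by ring] at h2
  unfold cc et vv
  rw [h1]
  have hf := fac_ne M
  have h3 : poch (1/2+M) M = (1/2 + M) * poch (M+3/2) M / (1/2 + M + M) := by
    rw [eq_div_iff (by positivity), h2]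
  rw [h3]
  generalize poch (M+3/2) M = A at *
  generalize poch (1/2) M = B at *
  generalize poch (M+1) M = C at *
  have : 1 + 2 * (M:ℚ) + 2*M ≠ 0 := by positivity
  have : 1 + 2 * (M:ℚ) * 2 ≠ 0 := by positivity
  simp only [Nat.choose_self]
  field_simp
  ring

lemma L4 (M j : ℕ) : ∑ k ∈ range (M+1), cc k * UU (NN M) k * et k j = (-1)^M * (2*M+1) * vv M j := by
  rcases Nat.lt_or_ge M j with h | h
  · rw [sum_eq_zero]
    · simp [vv, Nat.choose_eq_zero_of_lt h]
    · intro k hk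
      simp at hk
      rw [et_zero_of_lt (by omega)]; simp
  · have key : ∀ i ≤ M, ∑ k ∈ range (M+1), cc k * UU (NN M) k * et k (M-i) = (-1)^M * (2*M+1) * vv M (M-i) := by
      intro i
      induction i with
      | zero =>
        intro _
        rw [Nat.sub_zero, sum_range_succ, sum_eq_zero, zero_add, L4_top]
        intro k hk
        simp at hk
        rw [et_zero_of_lt (by omega)]; simp
      | succ i ih =>
        intro hi
        have h1 := ih (by omega)
        obtain ⟨t, ht⟩ : ∃ t, t = M - (i+1) := ⟨_, rfl⟩
        rw [show M - i = t + 1 by omega] at h1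
        rw [← ht]
        have h2 := L4_rec M t
        have h3 := vv_succ M t
        rw [h1] at h2
        have h4 : (M:ℚ) - t ≠ 0 := by
          rw [← Nat.cast_sub (by omega)]; exact_mod_cast (by omega : M - t ≠ 0)
        have h5 : (M:ℚ) + 1 + t ≠ 0 := by positivity
        apply mul_left_cancel₀ (mul_ne_zero h4 h5)
        rw [← h2]
        linear_combination (-1)^M * (2*(M:ℚ)+1) * h3
    have := key (M - j) (by omega)
    rwa [show M - (M - j) = j by omega] at this

lemma W_part (u : ℚ) (hu : ∀ j : ℕ, ((j:ℚ)+1)^2 - u ≠ 0) (M J : ℕ) :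
    ∑ j ∈ range J, al u j * ((((M:ℚ)+2)^2 - u) * vv (M+2) j - (((M:ℚ)+1)^2 - u) * vv M j)
     = - (2 * (2 * M + 3)) * J * (J^2 - u) * al u J *
        (((M+2).choose J : ℚ) * poch (M+1) J / (J.factorial : ℚ)) / ((M+1) * (M+2)) := by
  have hk1 : (M:ℚ) + 1 ≠ 0 := by positivity
  have hk2 : (M:ℚ) + 2 ≠ 0 := by positivity
  induction J with
  | zero => simp
  | succ J ih =>
    rw [sum_range_succ, ih]
    have hJ1 : (J:ℚ) + 1 ≠ 0 := by positivity
    have c1 := ch1 M J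
    have c2 := ch1 (M+1) J
    have e1 : (M.choose J : ℚ) = ((M+2).choose J : ℚ) * ((M:ℚ) + 2 - J) * ((M:ℚ) + 1 - J) / ((M+1)*(M+2)) := by
      rw [eq_div_iff (by positivity)]
      push_cast at c2
      linear_combination (-(M:ℚ)-2) * c1 - ((M:ℚ)+1-J) * c2
    have e2 : poch (((M+2:ℕ):ℚ) + 1) J = poch (M+1) J * (M+1+J) * (M+2+J) / ((M+1)*(M+2)) := by
      rw [eq_div_iff (by positivity)]
      have q1 := poch_shift (M+1) J
      have q2 := poch_shift (M+1+1) J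
      rw [show ((M+2:ℕ):ℚ)+1 = M+1+1+1 by push_cast; ring]
      linear_combination ((M:ℚ)+2+J) * q1 + ((M:ℚ)+1)*q2
    have e3 : ((M+2).choose (J+1) : ℚ) = ((M+2).choose J : ℚ) * (M + 2 - J) / (J+1) := by
      rw [eq_div_iff hJ1, ch3]; push_cast; ring
    unfold vv
    rw [e1, e2, e3, al_succ, poch_succ, fac_succ]
    have := fac_ne J
    have := hu J
    generalize poch (M+1) J = P
    generalize al u J = A
    generalize ((M+2).choose J : ℚ) = C
    generalize (J.factorial : ℚ) = f at *
    push_cast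
    field_simp
    ring

/-- Terminating Whipple sum -/
def WW (u : ℚ) (M : ℕ) : ℚ := ∑ j ∈ range (M+1), al u j * vv M j

lemma vv_zero_of_lt {k j : ℕ} (h : k < j) : vv k j = 0 := by
  simp [vv, Nat.choose_eq_zero_of_lt h]

lemma WW_rec (u : ℚ) (hu : ∀ j : ℕ, ((j:ℚ)+1)^2 - u ≠ 0) (M : ℕ) :
    WW u (M+2) = WW u M * ((((M:ℚ)+1)^2 - u) / (((M:ℚ)+2)^2 - u)) := by
  have h := W_part u hu M (M+3)
  rw [Nat.choose_eq_zero_of_lt (show M+2 < M+3 by omega)] at h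
  have h0 := hu (M+1)
  push_cast at h0
  rw [show (M:ℚ)+1+1 = M+2 by ring] at h0
  rw [mul_div_assoc', eq_div_iff h0]
  have h2 : WW u M = ∑ j ∈ range (M+3), al u j * vv M j := by
    unfold WW
    rw [sum_range_succ (n := M+2), sum_range_succ (n := M+1), vv_zero_of_lt (show M < M+2 by omega),
     vv_zero_of_lt (show M < M+1 by omega)]; ring
  rw [h2]
  unfold WW
  rw [sum_mul, sum_mul, ← sub_eq_zero, ← sum_sub_distrib]
  rw [show (0:ℚ) = - (2 * (2 * M + 3)) * (M+3:ℕ) * ((M+3:ℕ)^2 - u) * al u (M+3) *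
        (((0:ℕ) : ℚ) * poch (M+1) (M+3) / ((M+3).factorial : ℚ)) / ((M+1) * (M+2)) by simp]
  rw [← h]
  apply sum_congr rfl
  intro j _
  ring

lemma WW_even (u : ℚ) (hu : ∀ j : ℕ, ((j:ℚ)+1)^2 - u ≠ 0) (q : ℕ) :
    WW u (2*q) = ∏ i ∈ range q, ((2*(i:ℚ)+1)^2 - u) / ((2*(i:ℚ)+2)^2 - u) := by
  induction q with
  | zero => simp [WW, al, vv, poch_zero]
  | succ q ih =>
    rw [prod_range_succ, ← ih, show 2*(q+1) = 2*q+2 by ring, WW_rec u hu]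
    push_cast; rfl

lemma WW_odd (u : ℚ) (hu : ∀ j : ℕ, ((j:ℚ)+1)^2 - u ≠ 0) (q : ℕ) :
    WW u (2*q+1) = ∏ i ∈ range (q+1), ((2*(i:ℚ))^2 - u) / ((2*(i:ℚ)+1)^2 - u) := by
  induction q with
  | zero =>
    have := hu 0
    simp at this
    simp [WW, al, vv, poch, sum_range_succ]
    field_simp
    ring
  | succ q ih =>
    rw [prod_range_succ, ← ih, show 2*(q+1)+1 = 2*q+1+2 by ring, WW_rec u hu]
    push_cast
    congr 3 <;> ring

lemma FF (u : ℚ) (hu : ∀ j : ℕ, ((j:ℚ)+1)^2 - u ≠ 0) (M m : ℕ) (hm : M ≤ m) :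
    ∑ k ∈ range (m+1), cc k * (UU (NN M) k * UU u k) = (-1)^M * (2*M+1) * WW u M := by
  have h1 : ∑ k ∈ range (m+1), cc k * (UU (NN M) k * UU u k) = ∑ k ∈ range (M+1), cc k * (UU (NN M) k * UU u k) := by
    symm
    apply sum_subset
    · intro x; simp; omega
    · intro x _ hx
      simp at hx
      rw [UU_zero_of_lt (by omega)]; simp
  rw [h1]
  have h2 : ∀ k ∈ range (M+1), cc k * (UU (NN M) k * UU u k) =
     ∑ j ∈ range (M+1), al u j * (cc k * UU (NN M) k * et k j) := by
    intro k hk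
    rw [L1 u hu k (M+1) (by simpa using hk), mul_sum, mul_sum]
    apply sum_congr rfl; intros; ring
  rw [sum_congr rfl h2, sum_comm]
  unfold WW
  rw [mul_sum]
  apply sum_congr rfl
  intro j _
  rw [← mul_sum, L4]; ring

/-- p-integral rationals -/
noncomputable def OO (p : ℕ) [Fact p.Prime] : Subring ℚ := (PadicInt.subring p).comap (Rat.castHom ℚ_[p])

/-- multiples of `p^e` among the p-integral rationals -/
def PD (p : ℕ) [Fact p.Prime] (e : ℕ) (x : ℚ) : Prop := ∃ y ∈ OO p, x = (p:ℚ)^e * y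

section
variable (p : ℕ) [hp : Fact p.Prime]

lemma mem_OO (x : ℚ) : x ∈ OO p ↔ ‖(x : ℚ_[p])‖ ≤ 1 := by
  simp [OO, PadicInt.subring, Subring.mem_comap]

lemma PD_sum {ι : Type} (t : Finset ι) (f : ι → ℚ) (e : ℕ) (h : ∀ i ∈ t, PD p e (f i)) :
    PD p e (∑ i ∈ t, f i) := by
  classical
  induction t using Finset.induction_on with
  | empty => exact ⟨0, (OO p).zero_mem, by simp⟩
  | insert a t ha ih =>
    rw [sum_insert ha]
    obtain ⟨y, hy, e1⟩ := h a (mem_insert_self _ _)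
    obtain ⟨z, hz, e2⟩ := ih (fun i hi => h i (mem_insert_of_mem hi))
    exact ⟨y + z, (OO p).add_mem hy hz, by rw [e1, e2]; ring⟩

variable {p}
lemma PD.add {e : ℕ} {x y : ℚ} (hx : PD p e x) (hy : PD p e y) : PD p e (x+y) := by
  obtain ⟨a, ha, rfl⟩ := hx
  obtain ⟨b, hb, rfl⟩ := hy
  exact ⟨a+b, (OO p).add_mem ha hb, by ring⟩
lemma PD.sub {e : ℕ} {x y : ℚ} (hx : PD p e x) (hy : PD p e y) : PD p e (x-y) := by
  obtain ⟨a, ha, rfl⟩ := hx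
  obtain ⟨b, hb, rfl⟩ := hy
  exact ⟨a-b, (OO p).sub_mem ha hb, by ring⟩
lemma PD.mul {e f : ℕ} {x y : ℚ} (hx : PD p e x) (hy : PD p f y) : PD p (e+f) (x*y) := by
  obtain ⟨a, ha, rfl⟩ := hx
  obtain ⟨b, hb, rfl⟩ := hy
  exact ⟨a*b, (OO p).mul_mem ha hb, by ring⟩
lemma PD.mulO {e : ℕ} {x y : ℚ} (hx : PD p e x) (hy : y ∈ OO p) : PD p e (x*y) := by
  obtain ⟨a, ha, rfl⟩ := hx
  exact ⟨a*y, (OO p).mul_mem ha hy, by ring⟩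
lemma PD.mem {e : ℕ} {x : ℚ} (hx : PD p e x) : x ∈ OO p := by
  obtain ⟨a, ha, rfl⟩ := hx
  exact (OO p).mul_mem ((OO p).pow_mem (natCast_mem _ _) _) ha

lemma inv_mem_of_not_dvd {i : ℕ} (h : ¬ p ∣ i) : (1/(i:ℚ)) ∈ OO p := by
  rw [mem_OO]
  push_cast
  have : ‖((i:ℕ):ℚ_[p])‖ = 1 := by
    rw [Padic.norm_natCast_eq_one_iff]
    exact (Nat.Prime.coprime_iff_not_dvd hp.out).2 h
  rw [norm_div, this]; simp

lemma half_mem (hodd : Odd p) : (1/2 : ℚ) ∈ OO p := by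
  have h : ¬ p ∣ 2 := by
    intro h
    have := Nat.le_of_dvd (by norm_num) h
    have := hp.out.two_le
    have : p = 2 := by omega
    subst this; exact absurd hodd (by decide)
  exact_mod_cast inv_mem_of_not_dvd h

lemma poch_mem {x : ℚ} (hx : x ∈ OO p) (d : ℕ) : poch x d / (d.factorial : ℚ) ∈ OO p := by
  rw [mem_OO] at *
  obtain ⟨z, hz⟩ : ∃ z : ℤ_[p], (z : ℚ_[p]) = (x : ℚ_[p]) := ⟨⟨(x:ℚ_[p]), hx⟩, rfl⟩
  have h := PadicInt.norm_ascPochhammer_le (p := p) d z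
  have h2 : ((poch x d : ℚ) : ℚ_[p]) = (((ascPochhammer ℤ_[p] d).eval z : ℤ_[p]) : ℚ_[p]) := by
    clear h
    induction d with
    | zero => simp [poch_zero]
    | succ d ih =>
      rw [poch_succ, ascPochhammer_succ_eval]
      push_cast
      rw [ih, hz]
  push_cast
  rw [norm_div, h2]
  apply div_le_one_of_le₀ _ (norm_nonneg _)
  rw [← PadicInt.norm_def]
  refine h.trans (le_of_eq ?_)
  rw [PadicInt.norm_def]; simp

lemma one_sub_inv_mem {δ : ℚ} (h : PD p 2 δ) : 1 - δ ≠ 0 ∧ (1/(1-δ)) ∈ OO p := by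
  obtain ⟨y, hy, rfl⟩ := h
  rw [mem_OO] at hy
  have h1 : ‖(((p:ℚ)^2 * y : ℚ) : ℚ_[p])‖ < 1 := by
    push_cast
    rw [norm_mul, norm_pow]
    have := Padic.norm_p_lt_one (p := p)
    have h0 := norm_nonneg ((p:ℚ_[p]))
    have : ‖(p:ℚ_[p])‖^2 < 1 := by nlinarith
    nlinarith [norm_nonneg (y:ℚ_[p])]
  generalize (p:ℚ)^2 * y = δ at *
  have h2 : 1 ≤ ‖((1 - δ : ℚ) : ℚ_[p])‖ := by
    by_contra hc
    push Not at hc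
    have := Padic.nonarchimedean (p := p) ((1 - δ : ℚ) : ℚ_[p]) (δ : ℚ_[p])
    have h3 : ((1 - δ : ℚ) : ℚ_[p]) + (δ : ℚ_[p]) = 1 := by push_cast; ring
    rw [h3, norm_one] at this
    have := max_lt hc h1
    linarith
  constructor
  · intro h; rw [h] at h2; simp at h2; linarith
  · rw [mem_OO, Rat.cast_div, norm_div]
    simp only [Rat.cast_one, norm_one]
    exact div_le_one_of_le₀ h2 (norm_nonneg _)

lemma pow_div_mem {s i : ℕ} (hs : 0 < s) (hi : 0 < i) (hi2 : i < p^s) : PD p 1 ((p:ℚ)^s / i) := by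
  obtain ⟨e, i', h1, h2⟩ := Nat.exists_eq_pow_mul_and_not_dvd hi.ne' p hp.out.ne_one
  have he : e < s := by
    by_contra hc
    push Not at hc
    have : p^s ∣ i := by rw [h2]; exact Dvd.dvd.mul_right (pow_dvd_pow p hc) _
    exact absurd (Nat.le_of_dvd hi this) (by omega)
  obtain ⟨t, rfl⟩ : ∃ t, s = e + 1 + t := ⟨s - (e+1), by omega⟩
  refine ⟨(p:ℚ)^t * (1/i'), (OO p).mul_mem ((OO p).pow_mem (natCast_mem _ _) _) (inv_mem_of_not_dvd h1), ?_⟩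
  have : (p:ℚ) ≠ 0 := by exact_mod_cast hp.out.ne_zero
  rw [h2]; push_cast
  rw [pow_add, pow_add]
  field_simp

lemma delta_PD (hodd : Odd p) {s i M : ℕ} (hs : 0 < s) (hM : 2*M+1 = p^s) (hi : 0 < i) (hi2 : i < p^s) :
    PD p 2 (NN M / (i:ℚ)^2) := by
  have h := pow_div_mem hs hi hi2
  have h2 := (h.mul h).mulO ((OO p).mul_mem (half_mem hodd) (half_mem hodd))
  convert h2 using 1
  have : (p:ℚ)^s = 2 * M + 1 := by exact_mod_cast hM.symm
  rw [this, NN]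
  have : (i:ℚ) ≠ 0 := by exact_mod_cast hi.ne'
  field_simp

lemma al_diff (hodd : Odd p) {s M : ℕ} (hs : 0 < s) (hM : 2*M+1 = p^s) (j : ℕ) (hj : j < p^s) :
    PD p 2 (al (NN M) j - al 0 j) := by
  have hal0 : al 0 j ∈ OO p := by
    have h : al 0 j = (-1)^j * (poch (1/2) j / (j.factorial:ℚ)) := by
      clear hj
      induction j with
      | zero => simp [al, poch_zero]
      | succ j ih =>
        rw [al_succ, ih, poch_succ, fac_succ]
        have := fac_ne j
        have h2 : (j:ℚ)+1 ≠ 0 := by positivity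
        generalize poch (1/2) j = P
        simp only [sub_zero]
        field_simp
        ring
    rw [h]
    exact (OO p).mul_mem ((OO p).pow_mem ((OO p).neg_mem (OO p).one_mem) _) (poch_mem (half_mem hodd) _)
  have h2 : ∃ x, PD p 2 x ∧ al (NN M) j = al 0 j * (1 + x) := by
    clear hal0
    induction j with
    | zero => exact ⟨0, ⟨0, (OO p).zero_mem, by simp⟩, by simp [al]⟩
    | succ j ih =>
      obtain ⟨x, hx, e⟩ := ih (by omega)
      have hd := delta_PD hodd hs hM (Nat.succ_pos j) hj
      obtain ⟨h0, h1⟩ := one_sub_inv_mem hd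
      refine ⟨x + (NN M / ((j+1:ℕ):ℚ)^2) * (1/(1 - NN M / ((j+1:ℕ):ℚ)^2)) * (1+x), ?_, ?_⟩
      · exact hx.add ((hd.mulO h1).mulO ((OO p).add_mem (OO p).one_mem hx.mem))
      · rw [al_succ, al_succ, e]
        have h2 : (j:ℚ)+1 ≠ 0 := by positivity
        have h3 := hNN M j
        push_cast at *
        have h4 : 1 - NN M / ((j:ℚ)+1)^2 = (((j:ℚ)+1)^2 - NN M)/((j:ℚ)+1)^2 := by field_simp
        rw [h4]
        generalize al 0 j = A
        simp only [sub_zero]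
        field_simp
        ring
  obtain ⟨x, hx, e⟩ := h2
  rw [e]
  have := hx.mulO hal0
  convert this using 1; ring

lemma L3_PD (hodd : Odd p) {s M m : ℕ} (hM : 2*M+1 = p^s) (hm : m = M ∨ m = 2*M) (j : ℕ) :
    PD p s (∑ k ∈ range (m+1), cc k * et k j) := by
  have hc : (p:ℚ)^s = 2 * M + 1 := by exact_mod_cast hM.symm
  have h12 := half_mem hodd
  have hneg : ((-1:ℚ))^m ∈ OO p := (OO p).pow_mem ((OO p).neg_mem (OO p).one_mem) _
  have h32 : (3/2 + (m:ℚ)) ∈ OO p := by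
    rw [show (3/2 + (m:ℚ)) = 1/2 + ((m+1:ℕ):ℚ) by push_cast; ring]
    exact (OO p).add_mem h12 (natCast_mem _ _)
  have hA : PD p s (2 * poch (1/2) (m+1) / (m.factorial:ℚ)) := by
    rcases hm with rfl | rfl
    · refine ⟨_, poch_mem h12 m, ?_⟩
      rw [hc, poch_succ]
      field_simp
      ring
    · refine ⟨2 * (poch (1/2) (2*M+1) / ((2*M+1).factorial:ℚ)), (OO p).mul_mem (ofNat_mem _ 2) (poch_mem h12 _), ?_⟩
      rw [hc, fac_succ]
      have := fac_ne (2*M)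
      have : 2 * (M:ℚ) + 1 ≠ 0 := by positivity
      push_cast
      field_simp
  rw [L3, mul_comm ((-1:ℚ)^m)]
  exact (hA.mulO hneg).mulO ((OO p).mul_mem (natCast_mem _ _) (poch_mem h32 _))

lemma lc_mem (hodd : Odd p) (i j r : ℕ) : lc i j r ∈ OO p := by
  unfold lc
  exact (OO p).mul_mem ((OO p).mul_mem (natCast_mem _ _) (natCast_mem _ _))
    (poch_mem ((OO p).add_mem (half_mem hodd) (natCast_mem _ _)) _)

lemma sq_PD (hodd : Odd p) {s M m : ℕ} (hs : 0 < s) (hM : 2*M+1 = p^s) (hm : m = M ∨ m = 2*M) :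
    PD p (s+4) (∑ k ∈ range (m+1), cc k * (UU (NN M) k - UU 0 k)^2) := by
  have h0 : ∀ j : ℕ, ((j:ℚ)+1)^2 - 0 ≠ 0 := fun j => by rw [sub_zero]; positivity
  have h1 : ∀ k ∈ range (m+1), cc k * (UU (NN M) k - UU 0 k)^2 =
      ∑ i ∈ range (m+1), ∑ j ∈ range (m+1), ∑ r ∈ range (j+1),
        (al (NN M) i - al 0 i) * (al (NN M) j - al 0 j) * lc i j r * (cc k * et k (i+r)) := by
    intro k hk
    have hk' : k < m+1 := by simpa using hk
    rw [L1 _ (hNN M) k (m+1) hk', L1 0 h0 k (m+1) hk', ← sum_sub_distrib, sq, sum_mul_sum, mul_sum]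
    apply sum_congr rfl; intro i _
    rw [mul_sum]
    apply sum_congr rfl; intro j _
    have h2 := L2 k i j
    calc _ = cc k * (al (NN M) i - al 0 i) * (al (NN M) j - al 0 j) * (et k i * et k j) := by ring
      _ = _ := by
        rw [h2, mul_sum]
        apply sum_congr rfl; intros; ring
  rw [sum_congr rfl h1, sum_comm]
  apply PD_sum; intro i hi
  rw [sum_comm]
  apply PD_sum; intro j hj
  rw [sum_comm]
  apply PD_sum; intro r hr
  rw [← mul_sum]
  simp only [mem_range] at hi hj
  have hi' : i < p^s := by omega
  have hj' : j < p^s := by omega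
  have := (((al_diff hodd hs hM i hi').mul (al_diff hodd hs hM j hj')).mulO (lc_mem hodd i j r)).mul
    (L3_PD hodd hM hm (i+r))
  rwa [add_comm s 4]

lemma main_PD (hodd : Odd p) {s M m : ℕ} (hs : 0 < s) (hM : 2*M+1 = p^s) (hm : m = M ∨ m = 2*M) :
    PD p (s+4) ((∑ k ∈ range (m+1), cc k * (UU 0 k)^2) -
      (-1)^M * (2*M+1) * (2 * WW 0 M - WW (NN M) M)) := by
  have h0 : ∀ j : ℕ, ((j:ℚ)+1)^2 - 0 ≠ 0 := fun j => by rw [sub_zero]; positivity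
  have hMm : M ≤ m := by omega
  have h := sq_PD hodd hs hM hm
  have f1 := FF 0 h0 M m hMm
  have f2 := FF (NN M) (hNN M) M m hMm
  convert h using 1
  rw [mul_sub, show (-1)^M * (2*(M:ℚ)+1) * (2 * WW 0 M) = 2 * ((-1)^M * (2*(M:ℚ)+1) * (WW 0 M)) by ring, ← f1, ← f2,
    mul_sum, ← sum_sub_distrib, ← sum_sub_distrib]
  apply sum_congr rfl; intros; ring

lemma UU0 (k : ℕ) : UU 0 k = (poch (1/2) k / (k.factorial:ℚ))^2 := by
  induction k with
  | zero => simp [UU, poch_zero]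
  | succ k ih =>
    rw [UU_succ, ih, poch_succ, fac_succ]
    have := fac_ne k
    have h2 : (k:ℚ)+1 ≠ 0 := by positivity
    generalize poch (1/2) k = P
    simp only [sub_zero]
    field_simp
    ring

lemma summand (k : ℕ) : (-1 : ℚ) ^ k * (4 * k + 1) * poch (1 / 2) k ^ 5 / (k.factorial : ℚ) ^ 5 = cc k * (UU 0 k)^2 := by
  rw [UU0, cc]
  have := fac_ne k
  field_simp

lemma pcong_of {e : ℕ} {a b : ℚ} (h : PD p e (a - b)) : pcong p e a b := by
  by_cases hab : a = b
  · exact Or.inl hab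
  right
  obtain ⟨y, hy, h⟩ := h
  have hab' : a - b ≠ 0 := sub_ne_zero.2 hab
  have hp0 : (p:ℚ) ≠ 0 := by exact_mod_cast hp.out.ne_zero
  have hy0 : y ≠ 0 := by rintro rfl; simp at h; exact hab' h
  rw [h, padicValRat.mul (pow_ne_zero _ hp0) hy0, padicValRat.pow, padicValRat.self hp.out.one_lt]
  rw [mem_OO, Padic.eq_padicNorm, padicNorm.eq_zpow_of_nonzero hy0] at hy
  have h1 : (1:ℝ) < p := by exact_mod_cast hp.out.one_lt
  push_cast at hy
  have := (zpow_le_one_iff_right₀ h1).1 hy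
  linarith

end

lemma harm_succ (n l : ℕ) : harm (n+1) l = harm n l + 1/((n:ℚ)+1)^l := by
  unfold harm
  rw [sum_Icc_succ_top (by omega)]; push_cast; rfl

lemma harm_split (N : ℚ) (q : ℕ) : 
   ∑ i ∈ range q, (N / ((2*i+1:ℕ):ℚ)^2 - N / ((2*i+2:ℕ):ℚ)^2) = N * (harm (2*q) 2 - harm q 2 / 2) := by
  induction q with
  | zero => simp [harm]
  | succ q ih =>
    rw [sum_range_succ, ih, show 2*(q+1) = 2*q+1+1 by ring, harm_succ, harm_succ, harm_succ]
    have : (q:ℚ)+1 ≠ 0 := by positivity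
    have : 2*(q:ℚ)+1 ≠ 0 := by positivity
    have : 2*(q:ℚ)+2 ≠ 0 := by positivity
    push_cast
    have e : (2*(q:ℚ)+1+1) = 2*(q+1) := by ring
    have e' : (2*(q:ℚ)+2) = 2*(q+1) := by ring
    rw [e, e']
    field_simp
    ring

lemma poch_one (q : ℕ) : poch 1 q = (q.factorial:ℚ) := by
  induction q with
  | zero => simp [poch_zero]
  | succ q ih => rw [poch_succ, ih, fac_succ]; ring

lemma WW0_even (q : ℕ) : WW 0 (2*q) = (poch (1/2) q / (q.factorial:ℚ))^2 := by
  rw [WW_even 0 (fun j => by rw [sub_zero]; positivity), ← UU0]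
  unfold UU
  apply prod_congr rfl
  intro i _
  have : (i:ℚ)+1 ≠ 0 := by positivity
  have : 2*(i:ℚ)+2 ≠ 0 := by positivity
  simp only [sub_zero]
  have e' : (2*(i:ℚ)+2) = 2*(i+1) := by ring
  rw [e']
  field_simp

lemma even_case {p : ℕ} [Fact p.Prime] (hodd : Odd p) {s q : ℕ} (hs : 0 < s) (hM : 2*(2*q)+1 = p^s) :
    ∃ x, PD p 4 x ∧ WW (NN (2*q)) (2*q) = WW 0 (2*q) * (1 - NN (2*q) * (harm (2*q) 2 - harm q 2 / 2) + x) := by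
  rw [WW_even _ (hNN _), WW_even 0 (fun j => by rw [sub_zero]; positivity), ← harm_split]
  have key : ∀ r ≤ q, ∃ x, PD p 4 x ∧ 
     PD p 2 (∑ i ∈ range r, (NN (2*q) / ((2*i+1:ℕ):ℚ)^2 - NN (2*q) / ((2*i+2:ℕ):ℚ)^2)) ∧ 
     ∏ i ∈ range r, ((2*(i:ℚ)+1)^2 - NN (2*q)) / ((2*(i:ℚ)+2)^2 - NN (2*q)) =
     (∏ i ∈ range r, ((2*(i:ℚ)+1)^2 - 0) / ((2*(i:ℚ)+2)^2 - 0)) * 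
      (1 - ∑ i ∈ range r, (NN (2*q) / ((2*i+1:ℕ):ℚ)^2 - NN (2*q) / ((2*i+2:ℕ):ℚ)^2) + x) := by
    intro r
    induction r with
    | zero => intro _; exact ⟨0, ⟨0, (OO p).zero_mem, by simp⟩, ⟨0, (OO p).zero_mem, by simp⟩, by simp⟩
    | succ r ih =>
      intro hr
      obtain ⟨x, hx, hS, e⟩ := ih (by omega)
      have hA := delta_PD (i := 2*r+1) hodd hs hM (by omega) (by omega)
      have hB := delta_PD (i := 2*r+2) hodd hs hM (by omega) (by omega)
      obtain ⟨hB0, hB1⟩ := one_sub_inv_mem hB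
      rw [sum_range_succ, prod_range_succ, prod_range_succ, e]
      have e2 : ((2*(r:ℚ)+1)^2 - NN (2*q)) / ((2*(r:ℚ)+2)^2 - NN (2*q)) = 
        ((2*(r:ℚ)+1)^2 - 0) / ((2*(r:ℚ)+2)^2 - 0) * ((1 - NN (2*q) / ((2*r+1:ℕ):ℚ)^2) / (1 - NN (2*q) / ((2*r+2:ℕ):ℚ)^2)) := by
        have h1 : 2*(r:ℚ)+1 ≠ 0 := by positivity
        have h2 : 2*(r:ℚ)+2 ≠ 0 := by positivity
        push_cast
        have k1 : 1 - NN (2*q) / (2*(r:ℚ)+1)^2 = ((2*(r:ℚ)+1)^2 - NN (2*q)) / (2*(r:ℚ)+1)^2 := by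
          field_simp
        have k2 : 1 - NN (2*q) / (2*(r:ℚ)+2)^2 = ((2*(r:ℚ)+2)^2 - NN (2*q)) / (2*(r:ℚ)+2)^2 := by
          field_simp
        have h3 : (2*(r:ℚ)+2)^2 - NN (2*q) ≠ 0 := by
          have := hNN (2*q) (2*r+1)
          push_cast at this
          rwa [show 2*(r:ℚ)+1+1 = 2*r+2 by ring] at this
        rw [k1, k2, sub_zero, sub_zero]
        generalize (2*(r:ℚ)+1)^2 - NN (2*q) = X
        generalize (2*(r:ℚ)+2)^2 - NN (2*q) = Y at *
        generalize 2*(r:ℚ)+2 = Z at *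
        field_simp
      rw [e2]
      generalize ∏ i ∈ range r, ((2*(i:ℚ)+1)^2 - 0) / ((2*(i:ℚ)+2)^2 - 0) = P
      generalize ((2*(r:ℚ)+1)^2 - 0) / ((2*(r:ℚ)+2)^2 - 0) = Q
      generalize ∑ i ∈ range r, (NN (2*q) / ((2*i+1:ℕ):ℚ)^2 - NN (2*q) / ((2*i+2:ℕ):ℚ)^2) = S at *
      generalize NN (2*q) / ((2*r+1:ℕ):ℚ)^2 = A at *
      generalize NN (2*q) / ((2*r+2:ℕ):ℚ)^2 = B at *
      have hAB := hA.sub hB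
      have hy : PD p 4 (B*(B-A)*(1/(1-B))) := (hB.mul (hB.sub hA)).mulO hB1
      have h1 := (OO p).one_mem
      refine ⟨x * (1 - (A - B)) + S * (A-B) + (B*(B-A)*(1/(1-B))) * (1 - S + x), ?_, hS.add hAB, ?_⟩
      · exact ((hx.mulO ((OO p).sub_mem h1 hAB.mem)).add (hS.mul hAB)).add
          (hy.mulO ((OO p).add_mem ((OO p).sub_mem h1 hS.mem) hx.mem))
      · field_simp
        ring
  obtain ⟨x, hx, _, h⟩ := key q le_rfl
  exact ⟨x, hx, h⟩

lemma poch_odd (c : ℚ) (q : ℕ) : poch (c - q) (2*q+1) = c * ∏ t ∈ range q, (c^2 - ((t:ℚ)+1)^2) := by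
  induction q with
  | zero => simp [poch]
  | succ q ih =>
    rw [prod_range_succ, ← mul_assoc, ← ih, show 2*(q+1)+1 = (2*q+1)+1+1 by ring, poch_succ, poch_succ']
    rw [show c - ((q+1:ℕ):ℚ) + 1 = c - q by push_cast; ring]
    push_cast; ring

lemma poch_even (c : ℚ) (q : ℕ) : poch (c + 1/2 - q) (2*q) = ∏ t ∈ range q, (c^2 - ((t:ℚ)+1/2)^2) := by
  induction q with
  | zero => simp [poch]
  | succ q ih =>
    rw [prod_range_succ, ← ih, show 2*(q+1) = (2*q)+1+1 by ring, poch_succ, poch_succ']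
    rw [show c + 1/2 - ((q+1:ℕ):ℚ) + 1 = c + 1/2 - q by push_cast; ring]
    push_cast; ring

lemma odd_case (q : ℕ) : (4*(q:ℚ)+3) * WW (NN (2*q+1)) (2*q+1) = 
    (4*(q:ℚ)+3)^2 * (poch (3/4) (2*q+1) / poch (5/4) (2*q+1)) := by
  rw [WW_odd _ (hNN _)]
  obtain ⟨c, hc⟩ : ∃ c : ℚ, c = q + 3/4 := ⟨_, rfl⟩
  have h1 := poch_odd c q
  have h2 := poch_even c q
  rw [show c - q = 3/4 by rw [hc]; ring] at h1
  rw [show c + 1/2 - q = 5/4 by rw [hc]; ring] at h2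
  have p1 := (poch_pos (x := 5/4) (by norm_num) (2*q)).ne'
  rw [poch_succ (5/4), h1, h2]
  rw [h2] at p1
  have hN : NN (2*q+1) = 4 * c^2 := by rw [hc, NN]; push_cast; ring
  have e1 : ∀ i ∈ range (q+1), ((2*(i:ℚ))^2 - NN (2*q+1)) / ((2*(i:ℚ)+1)^2 - NN (2*q+1)) = 
      (c^2 - (i:ℚ)^2) / (c^2 - ((i:ℚ)+1/2)^2) := by
    intro i _
    rw [hN, ← mul_div_mul_left (c^2 - (i:ℚ)^2) _ (show (-4:ℚ) ≠ 0 by norm_num)]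
    congr 1 <;> ring
  rw [prod_congr rfl e1, prod_div_distrib, prod_range_succ', prod_range_succ (n := q)]
  push_cast
  generalize (∏ t ∈ range q, (c^2 - ((t:ℚ)+1/2)^2)) = X at *
  generalize (∏ t ∈ range q, (c^2 - ((t:ℚ)+1)^2)) = Y at *
  rw [show c^2 - ((q:ℚ)+1/2)^2 = (1/4) * (5/4 + 2*q) by rw [hc]; ring]
  rw [show 4*(q:ℚ)+3 = 4 * c by rw [hc]; ring]
  have : 5/4 + 2*(q:ℚ) ≠ 0 := by positivity
  have : 5 + 4*(2*(q:ℚ)) ≠ 0 := by positivity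
  field_simp
  ring

lemma WW0_odd (q : ℕ) : WW 0 (2*q+1) = 0 := by
  rw [WW_odd 0 (fun j => by rw [sub_zero]; positivity)]
  apply prod_eq_zero (mem_range.2 (Nat.succ_pos q))
  simp

theorem stmt3 (p : ℕ) (hp : p.Prime) (hodd : Odd p) (s : ℕ) (hs : 0 < s)
    (m : ℕ) (hm : m = (p ^ s - 1) / 2 ∨ m = p ^ s - 1) :
    (p ^ s % 4 = 1 →
      pcong p (s + 4)
        (∑ k ∈ Finset.range (m + 1),
          (-1 : ℚ) ^ k * (4 * k + 1) * poch (1 / 2) k ^ 5 / (k.factorial : ℚ) ^ 5)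
        (poch (1 / 2) ((p ^ s - 1) / 4) ^ 2 / poch 1 ((p ^ s - 1) / 4) ^ 2 *
          ((p : ℚ) ^ s + (p : ℚ) ^ (3 * s) / 4 * harm ((p ^ s - 1) / 2) 2 -
            (p : ℚ) ^ (3 * s) / 8 * harm ((p ^ s - 1) / 4) 2))) ∧
    (p ^ s % 4 = 3 →
      pcong p (s + 4)
        (∑ k ∈ Finset.range (m + 1),
          (-1 : ℚ) ^ k * (4 * k + 1) * poch (1 / 2) k ^ 5 / (k.factorial : ℚ) ^ 5)
        ((p : ℚ) ^ (2 * s) *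
          (poch (3 / 4) ((p ^ s - 1) / 2) / poch (5 / 4) ((p ^ s - 1) / 2)))) := by
  have : Fact p.Prime := ⟨hp⟩
  simp only [summand]
  constructor
  · intro h4
    obtain ⟨q, hq⟩ : ∃ q, p^s = 4*q+1 := ⟨p^s/4, by omega⟩
    have hM : 2*(2*q)+1 = p^s := by omega
    have hc : (p:ℚ)^s = 4*q+1 := by exact_mod_cast hq
    have hm' : m = 2*q ∨ m = 2*(2*q) := by omega
    have h := main_PD hodd hs hM hm'
    obtain ⟨x, hx, e⟩ := even_case hodd hs hM
    rw [show (p^s-1)/4 = q by omega, show (p^s-1)/2 = 2*q by omega]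
    apply pcong_of
    have hw : WW 0 (2*q) ∈ OO p := by
      rw [WW0_even]; exact (OO p).pow_mem (poch_mem (half_mem hodd) _) _
    have h2 : PD p (s+4) ((p:ℚ)^s * x * WW 0 (2*q)) :=
      (PD.mul ⟨1, (OO p).one_mem, by simp⟩ hx).mulO hw
    convert h.sub h2 using 1
    rw [e, pow_mul' (p:ℚ) 3 s, hc, poch_one, ← div_pow, ← WW0_even, NN]
    push_cast
    rw [pow_mul]
    norm_num
    ring
  · intro h4
    obtain ⟨q, hq⟩ : ∃ q, p^s = 4*q+3 := ⟨p^s/4, by omega⟩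
    have hM : 2*(2*q+1)+1 = p^s := by omega
    have hc : (p:ℚ)^s = 4*q+3 := by exact_mod_cast hq
    have hm' : m = 2*q+1 ∨ m = 2*(2*q+1) := by omega
    have h := main_PD hodd hs hM hm'
    rw [show (p^s-1)/2 = 2*q+1 by omega]
    apply pcong_of
    convert h using 2
    rw [pow_mul' (p:ℚ) 2 s, hc, ← odd_case, WW0_odd, pow_succ, pow_mul]
    push_cast
    norm_num
    ring
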